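/- arXiv:2212.14756 — 2 statements merged into one kernel-verified Lean document; each statement's English description precedes it below -/
import Mathlib

section
/- Let (A, g, h, f, p) be a tense H-algebra and S ⊆ A. If S is a prime filter of A, then the complements A \ g⁻¹(S) = {x : g(x) ∉ S} and A \ h⁻¹(S) = {x : h(x) ∉ S} are filters of A. -/
structure IsTenseH {A : Type*} [HeytingAlgebra A] (g h f p : A → A) : Prop where
  t1g : g ⊤ = ⊥
  t1h : h ⊤ = ⊥
  t2f : f ⊥ = ⊤
  t2p : p ⊥ = ⊤
  t3g : ∀ x y : A, g (x ⊓ y) = g x ⊔ g y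
  t3h : ∀ x y : A, h (x ⊓ y) = h x ⊔ h y
  t4f : ∀ x y : A, f (x ⊔ y) = f x ⊓ f y
  t4p : ∀ x y : A, p (x ⊔ y) = p x ⊓ p y
  t5gh : ∀ x : A, g (h x) ≤ x
  t5hg : ∀ x : A, h (g x) ≤ x
  t6pf : ∀ x : A, x ≤ p (f x)
  t6fp : ∀ x : A, x ≤ f (p x)
  t7g : ∀ x y : A, g x ⊓ f y ≤ g (x ⊔ y)
  t7h : ∀ x y : A, h x ⊓ p y ≤ h (x ⊔ y)
  t8f : ∀ x y : A, f (x ⊓ y) ≤ f x ⊔ g y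
  t8p : ∀ x y : A, p (x ⊓ y) ≤ p x ⊔ h y

def IsLatFilter {A : Type*} [HeytingAlgebra A] (F : Set A) : Prop :=
  F.Nonempty ∧ (∀ x y : A, x ∈ F → x ≤ y → y ∈ F) ∧ (∀ x y : A, x ∈ F → y ∈ F → x ⊓ y ∈ F)

def IsLatIdeal {A : Type*} [HeytingAlgebra A] (I : Set A) : Prop :=
  I.Nonempty ∧ (∀ x y : A, x ∈ I → y ≤ x → y ∈ I) ∧ (∀ x y : A, x ∈ I → y ∈ I → x ⊔ y ∈ I)

def IsPrimeFilter {A : Type*} [HeytingAlgebra A] (F : Set A) : Prop :=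
  IsLatFilter F ∧ (⊥ : A) ∉ F ∧ ∀ x y : A, x ⊔ y ∈ F → x ∈ F ∨ y ∈ F

def IsNegTenseFilter {A : Type*} [HeytingAlgebra A] (g h f p : A → A) (F : Set A) : Prop :=
  IsLatFilter F ∧
    ∀ u ∈ ({g, h, f, p} : Set (A → A)), ∀ x y : A, x ⇨ y ∈ F → u y ⇨ u x ∈ F

def thetaF {A : Type*} [HeytingAlgebra A] (F : Set A) (x y : A) : Prop :=
  (x ⇨ y) ⊓ (y ⇨ x) ∈ F

def IsTenseCongruence {A : Type*} [HeytingAlgebra A] (g h f p : A → A)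
    (θ : A → A → Prop) : Prop :=
  Equivalence θ ∧
    (∀ x₁ y₁ x₂ y₂ : A, θ x₁ y₁ → θ x₂ y₂ → θ (x₁ ⊓ x₂) (y₁ ⊓ y₂)) ∧
    (∀ x₁ y₁ x₂ y₂ : A, θ x₁ y₁ → θ x₂ y₂ → θ (x₁ ⊔ x₂) (y₁ ⊔ y₂)) ∧
    (∀ x₁ y₁ x₂ y₂ : A, θ x₁ y₁ → θ x₂ y₂ → θ (x₁ ⇨ x₂) (y₁ ⇨ y₂)) ∧
    ∀ u ∈ ({g, h, f, p} : Set (A → A)), ∀ x y : A, θ x y → θ (u x) (u y)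

def Nop {A : Type*} [HeytingAlgebra A] (g h : A → A) (a : A) : A :=
  (g a ⇨ ⊥) ⊓ (h a ⇨ ⊥)

def NIter {A : Type*} [HeytingAlgebra A] (N : A → A) : ℕ → A → A
  | 0, a => a
  | n + 1, a => N (NIter N n a)

def NPar {A : Type*} [HeytingAlgebra A] (N : A → A) : ℕ → A → A
  | 0, a => NIter N 0 a
  | k + 1, a => NPar N k a ⊓ NIter N (k + 1) a

/-!
The complement of a prime filter is an ideal, and a map turning finite meets into finite joins
pulls ideals back to filters. The sets in question are the preimages of `Sᶜ` under `g` and `h`.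
-/

theorem IsPrimeFilter.isIdeal_compl {A : Type*} [HeytingAlgebra A] {S : Set A}
    (hS : IsPrimeFilter S) : Order.IsIdeal Sᶜ := by
  obtain ⟨⟨-, hup, -⟩, hbot, hprime⟩ := hS
  refine ⟨fun x y hyx hx hy ↦ hx (hup y x hy hyx), ⟨⊥, hbot⟩, fun x hx y hy ↦ ?_⟩
  have hxy : x ⊔ y ∉ S := fun hmem ↦ (hprime x y hmem).elim hx hy
  exact ⟨x ⊔ y, hxy, le_sup_left, le_sup_right⟩

theorem IsLatFilter.of_isPFilter {A : Type*} [HeytingAlgebra A] {F : Set A}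
    (hF : Order.IsPFilter F) : IsLatFilter F := by
  let P : Order.PFilter A := hF.toPFilter
  exact ⟨P.nonempty, fun _ _ hx hxy ↦ P.mem_of_le hxy hx, fun _ _ hx hy ↦ P.inf_mem hx hy⟩

theorem antitone_of_map_inf {α β : Type*} [SemilatticeInf α] [SemilatticeSup β] {u : α → β}
    (map_inf : ∀ x y, u (x ⊓ y) = u x ⊔ u y) : Antitone u :=
  Monotone.of_map_inf (β := βᵒᵈ) map_inf

theorem stmt5_general {α β : Type*} [SemilatticeInf α] [OrderTop α] [SemilatticeSup β]
    [OrderBot β] {u : α → β} (map_top : u ⊤ = ⊥) (map_inf : ∀ x y, u (x ⊓ y) = u x ⊔ u y)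
    {S : Set β} (hS : Order.IsIdeal Sᶜ) : Order.IsPFilter {x | u x ∉ S} := by
  let I : Order.Ideal β := hS.toIdeal
  have hu : Antitone u := antitone_of_map_inf map_inf
  have htop : u ⊤ ∈ I := by simp only [map_top, I.bot_mem]
  have hinf : ∀ x ∈ u ⁻¹' I, ∀ y ∈ u ⁻¹' I, u (x ⊓ y) ∈ I := fun x hx y hy ↦
    (map_inf x y).symm ▸ Order.Ideal.sup_mem hx hy
  exact .of_def ⟨⊤, htop⟩ (fun x hx y hy ↦ ⟨x ⊓ y, hinf x hx y hy, inf_le_left, inf_le_right⟩)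
    fun hxy hx ↦ I.lower (hu hxy) hx

theorem stmt5 {A : Type*} [HeytingAlgebra A] (g h f p : A → A)
    (H : IsTenseH g h f p) (S : Set A) (hS : IsPrimeFilter S) :
    IsLatFilter {x : A | g x ∉ S} ∧ IsLatFilter {x : A | h x ∉ S} := by
  have hI : Order.IsIdeal Sᶜ := hS.isIdeal_compl
  exact ⟨.of_isPFilter (stmt5_general H.t1g H.t3g hI), .of_isPFilter (stmt5_general H.t1h H.t3h hI)⟩
end

section
/- Let (A, g, h, f, p) be a tense H-algebra. The assignments F ↦ θ_F, where θ_F = {(x, y) : (x ⇨ y) ⊓ (y ⇨ x) ∈ F}, and θ ↦ [1]_θ = {x : (x, 1) ∈ θ} are mutually inverse, inclusion-preserving bijections between the set of negative tense filters of A and the set of congruences on (A, g, h, f, p) (equivalence relations on A compatible with ⊓, ⊔, ⇨, g, h, f and p). -/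
/-!
Modulo a congruence `θ`, the inequality `a ≤ b` is encoded by `θ (a ⇨ b) ⊤`, so `θ` is determined
by its class of `⊤`. Conversely, for a filter `F` the relation `x ⇨ y ∈ F` is a preorder for which
`⊓` and `⊔` are monotone and `⇨` is antitone in its first argument and monotone in its second;
`thetaF F` is the induced equivalence, hence a Heyting congruence. A negative tense filter is one
for which the four operations are antitone for this preorder, hence compatible with `thetaF F`.
When `F` is the class of `⊤` of a congruence, their antitonicity on `A` gives this condition: if
`θ (x ⇨ y) ⊤`, then `x ⊓ y` and `x` are congruent, while `u y ≤ u (x ⊓ y)`.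
-/

section HimpInequalities

variable {α : Type*} [GeneralizedHeytingAlgebra α] (a b c d : α)

theorem himp_inf_himp_le_inf_himp_inf : (a ⇨ b) ⊓ (c ⇨ d) ≤ a ⊓ c ⇨ b ⊓ d := by
  rw [himp_inf_distrib]
  exact inf_le_inf (himp_le_himp_right inf_le_left) (himp_le_himp_right inf_le_right)

theorem himp_inf_himp_le_sup_himp_sup : (a ⇨ b) ⊓ (c ⇨ d) ≤ a ⊔ c ⇨ b ⊔ d := by
  rw [sup_himp_distrib]
  exact inf_le_inf (himp_le_himp_left le_sup_left) (himp_le_himp_left le_sup_right)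

theorem himp_inf_himp_le_himp_himp_himp : (b ⇨ a) ⊓ (c ⇨ d) ≤ (a ⇨ c) ⇨ (b ⇨ d) := by
  rw [le_himp_iff]
  calc (b ⇨ a) ⊓ (c ⇨ d) ⊓ (a ⇨ c) = (b ⇨ a) ⊓ (a ⇨ c) ⊓ (c ⇨ d) := inf_right_comm _ _ _
    _ ≤ (b ⇨ c) ⊓ (c ⇨ d) := inf_le_inf_right _ (himp_triangle b a c)
    _ ≤ b ⇨ d := himp_triangle b c d

end HimpInequalities

section HeytingAlgebra

variable {A : Type*} [HeytingAlgebra A]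

theorem IsTenseH.antitone {g h f p : A → A} (H : IsTenseH g h f p) :
    ∀ u ∈ ({g, h, f, p} : Set (A → A)), Antitone u := by
  rintro u (rfl | rfl | rfl | rfl)
  · exact antitoneOn_univ.1 (.of_map_inf fun x _ y _ => H.t3g x y)
  · exact antitoneOn_univ.1 (.of_map_inf fun x _ y _ => H.t3h x y)
  · exact antitoneOn_univ.1 (.of_map_sup fun x _ y _ => H.t4f x y)
  · exact antitoneOn_univ.1 (.of_map_sup fun x _ y _ => H.t4p x y)

/-- A congruence of the Heyting algebra `A`: an equivalence relation compatible with `⊓`, `⊔` and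
`⇨`. It separates the Heyting part of a tense congruence from the unary operations; compatibility
with `⊥` and `⊤` is automatic by reflexivity. -/
structure IsHeytingCongruence (θ : A → A → Prop) : Prop extends Equivalence θ where
  inf : ∀ x₁ y₁ x₂ y₂ : A, θ x₁ y₁ → θ x₂ y₂ → θ (x₁ ⊓ x₂) (y₁ ⊓ y₂)
  sup : ∀ x₁ y₁ x₂ y₂ : A, θ x₁ y₁ → θ x₂ y₂ → θ (x₁ ⊔ x₂) (y₁ ⊔ y₂)
  himp : ∀ x₁ y₁ x₂ y₂ : A, θ x₁ y₁ → θ x₂ y₂ → θ (x₁ ⇨ x₂) (y₁ ⇨ y₂)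

theorem isTenseCongruence_iff {g h f p : A → A} {θ : A → A → Prop} :
    IsTenseCongruence g h f p θ ↔ IsHeytingCongruence θ ∧
      ∀ u ∈ ({g, h, f, p} : Set (A → A)), ∀ x y : A, θ x y → θ (u x) (u y) :=
  ⟨fun ⟨equiv, inf, sup, himp, map⟩ => ⟨⟨equiv, inf, sup, himp⟩, map⟩,
    fun ⟨hθ, map⟩ => ⟨hθ.toEquivalence, hθ.inf, hθ.sup, hθ.himp, map⟩⟩

theorem setOf_thetaF_top (F : Set A) : {x : A | thetaF F x ⊤} = F := by
  ext x
  simp only [thetaF, himp_top, top_himp, top_inf_eq, Set.mem_ofPred_eq]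

theorem subset_iff_thetaF_imp_thetaF {F F' : Set A} :
    F ⊆ F' ↔ ∀ x y : A, thetaF F x y → thetaF F' x y := by
  refine ⟨fun hFF' x y hxy => hFF' hxy, fun hθ => ?_⟩
  rw [← setOf_thetaF_top F, ← setOf_thetaF_top F']
  exact fun x hx => hθ x ⊤ hx

namespace IsLatFilter

variable {F : Set A} (hF : IsLatFilter F) {x y z : A}
include hF

theorem mem_of_le (hx : x ∈ F) (hxy : x ≤ y) : y ∈ F :=
  hF.2.1 x y hx hxy

theorem mem_of_inf_le (hx : x ∈ F) (hy : y ∈ F) (hxy : x ⊓ y ≤ z) : z ∈ F :=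
  hF.mem_of_le (hF.2.2 x y hx hy) hxy

theorem top_mem : ⊤ ∈ F :=
  let ⟨_, hx⟩ := hF.1
  hF.mem_of_le hx le_top

theorem thetaF_iff : thetaF F x y ↔ x ⇨ y ∈ F ∧ y ⇨ x ∈ F :=
  ⟨fun hxy => ⟨hF.mem_of_le hxy inf_le_left, hF.mem_of_le hxy inf_le_right⟩,
    fun ⟨hxy, hyx⟩ => hF.2.2 _ _ hxy hyx⟩

theorem equivalence_thetaF : Equivalence (thetaF F) where
  refl x := by simpa only [hF.thetaF_iff, himp_self, and_self] using hF.top_mem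
  symm hxy := hF.thetaF_iff.2 (hF.thetaF_iff.1 hxy).symm
  trans {x y z} hxy hyz := by
    rw [hF.thetaF_iff] at hxy hyz ⊢
    exact ⟨hF.mem_of_inf_le hxy.1 hyz.1 (himp_triangle x y z),
      hF.mem_of_inf_le hyz.2 hxy.2 (himp_triangle z y x)⟩

theorem isHeytingCongruence_thetaF : IsHeytingCongruence (thetaF F) where
  toEquivalence := hF.equivalence_thetaF
  inf x₁ y₁ x₂ y₂ h₁ h₂ := by
    rw [hF.thetaF_iff] at h₁ h₂ ⊢
    exact ⟨hF.mem_of_inf_le h₁.1 h₂.1 (himp_inf_himp_le_inf_himp_inf x₁ y₁ x₂ y₂),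
      hF.mem_of_inf_le h₁.2 h₂.2 (himp_inf_himp_le_inf_himp_inf y₁ x₁ y₂ x₂)⟩
  sup x₁ y₁ x₂ y₂ h₁ h₂ := by
    rw [hF.thetaF_iff] at h₁ h₂ ⊢
    exact ⟨hF.mem_of_inf_le h₁.1 h₂.1 (himp_inf_himp_le_sup_himp_sup x₁ y₁ x₂ y₂),
      hF.mem_of_inf_le h₁.2 h₂.2 (himp_inf_himp_le_sup_himp_sup y₁ x₁ y₂ x₂)⟩
  himp x₁ y₁ x₂ y₂ h₁ h₂ := by
    rw [hF.thetaF_iff] at h₁ h₂ ⊢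
    exact ⟨hF.mem_of_inf_le h₁.2 h₂.1 (himp_inf_himp_le_himp_himp_himp x₁ y₁ x₂ y₂),
      hF.mem_of_inf_le h₁.1 h₂.2 (himp_inf_himp_le_himp_himp_himp y₁ x₁ y₂ x₂)⟩

theorem thetaF_map {u : A → A} (hu : ∀ x y : A, x ⇨ y ∈ F → u y ⇨ u x ∈ F)
    (hxy : thetaF F x y) : thetaF F (u x) (u y) := by
  rw [hF.thetaF_iff] at hxy ⊢
  exact ⟨hu y x hxy.2, hu x y hxy.1⟩

end IsLatFilter

theorem IsNegTenseFilter.isTenseCongruence_thetaF {g h f p : A → A} {F : Set A}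
    (hF : IsNegTenseFilter g h f p F) : IsTenseCongruence g h f p (thetaF F) :=
  isTenseCongruence_iff.2
    ⟨hF.1.isHeytingCongruence_thetaF, fun u hu _ _ => hF.1.thetaF_map (hF.2 u hu)⟩

namespace IsHeytingCongruence

variable {θ : A → A → Prop} (hθ : IsHeytingCongruence θ) {x y : A}
include hθ

theorem rel_top_of_le (hx : θ x ⊤) (hxy : x ≤ y) : θ y ⊤ := by
  simpa only [sup_eq_right.2 hxy, top_sup_eq] using hθ.sup _ _ _ _ hx (hθ.refl y)

theorem isLatFilter_setOf_rel_top : IsLatFilter {x : A | θ x ⊤} :=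
  ⟨⟨⊤, hθ.refl ⊤⟩, fun _ _ => hθ.rel_top_of_le, fun x y hx hy => by
    simpa only [Set.mem_ofPred_eq, inf_top_eq] using hθ.inf _ _ _ _ hx hy⟩

theorem himp_rel_top (hxy : θ x y) : θ (x ⇨ y) ⊤ := by
  simpa only [himp_self] using hθ.himp _ _ _ _ hxy (hθ.refl y)

theorem inf_rel_left (hxy : θ (x ⇨ y) ⊤) : θ (x ⊓ y) x := by
  simpa only [inf_himp, inf_top_eq] using hθ.inf _ _ _ _ (hθ.refl x) hxy

theorem rel_iff_himp_rel_top : θ x y ↔ θ (x ⇨ y) ⊤ ∧ θ (y ⇨ x) ⊤ := by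
  refine ⟨fun hxy => ⟨hθ.himp_rel_top hxy, hθ.himp_rel_top (hθ.symm hxy)⟩, fun ⟨hxy, hyx⟩ => ?_⟩
  have hx : θ (x ⊓ y) x := hθ.inf_rel_left hxy
  have hy : θ (x ⊓ y) y := inf_comm y x ▸ hθ.inf_rel_left hyx
  exact hθ.trans (hθ.symm hx) hy

theorem thetaF_setOf_rel_top : thetaF {x : A | θ x ⊤} = θ :=
  funext₂ fun _ _ => propext <|
    hθ.isLatFilter_setOf_rel_top.thetaF_iff.trans hθ.rel_iff_himp_rel_top.symm

theorem himp_map_rel_top {u : A → A} (hanti : Antitone u)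
    (hu : ∀ x y : A, θ x y → θ (u x) (u y)) (hxy : θ (x ⇨ y) ⊤) : θ (u y ⇨ u x) ⊤ := by
  have hle : u y ≤ u (x ⊓ y) := hanti inf_le_right
  have hrel : θ (u (x ⊓ y)) (u x) := hu _ _ (hθ.inf_rel_left hxy)
  have : θ (u y ⇨ u (x ⊓ y)) (u y ⇨ u x) := hθ.himp _ _ _ _ (hθ.refl (u y)) hrel
  rw [himp_eq_top_iff.2 hle] at this
  exact hθ.symm this

end IsHeytingCongruence

theorem IsTenseCongruence.isNegTenseFilter_setOf_rel_top {g h f p : A → A} {θ : A → A → Prop}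
    (hθ : IsTenseCongruence g h f p θ)
    (hanti : ∀ u ∈ ({g, h, f, p} : Set (A → A)), Antitone u) :
    IsNegTenseFilter g h f p {x : A | θ x ⊤} :=
  have ⟨hheyt, hmap⟩ := isTenseCongruence_iff.1 hθ
  ⟨hheyt.isLatFilter_setOf_rel_top,
    fun u hu _ _ => hheyt.himp_map_rel_top (hanti u hu) (hmap u hu)⟩

theorem stmt10_general (g h f p : A → A)
    (hanti : ∀ u ∈ ({g, h, f, p} : Set (A → A)), Antitone u) :
    (∀ F : Set A, IsNegTenseFilter g h f p F →
      IsTenseCongruence g h f p (thetaF F) ∧ {x : A | thetaF F x ⊤} = F) ∧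
    (∀ θ : A → A → Prop, IsTenseCongruence g h f p θ →
      IsNegTenseFilter g h f p {x : A | θ x ⊤} ∧ thetaF {x : A | θ x ⊤} = θ) ∧
    (∀ F F' : Set A, F ⊆ F' ↔ ∀ x y : A, thetaF F x y → thetaF F' x y) :=
  ⟨fun F hF => ⟨hF.isTenseCongruence_thetaF, setOf_thetaF_top F⟩,
    fun _ hθ => ⟨hθ.isNegTenseFilter_setOf_rel_top hanti,
      (isTenseCongruence_iff.1 hθ).1.thetaF_setOf_rel_top⟩,
    fun _ _ => subset_iff_thetaF_imp_thetaF⟩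

end HeytingAlgebra

theorem stmt10 {A : Type*} [HeytingAlgebra A] (g h f p : A → A)
    (H : IsTenseH g h f p) :
    (∀ F : Set A, IsNegTenseFilter g h f p F →
      IsTenseCongruence g h f p (thetaF F) ∧ {x : A | thetaF F x ⊤} = F) ∧
    (∀ θ : A → A → Prop, IsTenseCongruence g h f p θ →
      IsNegTenseFilter g h f p {x : A | θ x ⊤} ∧ thetaF {x : A | θ x ⊤} = θ) ∧
    (∀ F F' : Set A, IsNegTenseFilter g h f p F → IsNegTenseFilter g h f p F' →
      (F ⊆ F' ↔ ∀ x y : A, thetaF F x y → thetaF F' x y)) := by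
  have ⟨filter, congruence, inclusion⟩ := stmt10_general g h f p H.antitone
  exact ⟨filter, congruence, fun F F' _ _ => inclusion F F'⟩
end
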